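/- Let A be a finite-dimensional left Leibniz algebra over a field F of characteristic zero, let B be a subinvariant subalgebra of A, let c ∈ A, and let B̄ be the smallest subalgebra of A containing B such that cB̄ + B̄c ⊆ B̄. Then B̄ is a subinvariant subalgebra of A. -/

import Mathlib

open Submodule

section LeibnizDefs

variable {F : Type*} {A : Type*} [Field F] [AddCommGroup A] [Module F A]

/-- The span of all products `b*c` with `b ∈ B`, `c ∈ C`. -/
def mulSub (mul : A →ₗ[F] A →ₗ[F] A) (B C : Submodule F A) : Submodule F A :=
  Submodule.span F {z : A | ∃ b ∈ B, ∃ c ∈ C, mul b c = z}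

/-- `fSub mul B C = B·C + C·B`, the function `f(B,C)`. -/
def fSub (mul : A →ₗ[F] A →ₗ[F] A) (B C : Submodule F A) : Submodule F A :=
  mulSub mul B C ⊔ mulSub mul C B

/-- `fIter mul B C n = f^{n+1}(B,C)` (so index `0` is `f^1(B,C) = f(B,C)`). -/
def fIter (mul : A →ₗ[F] A →ₗ[F] A) (B C : Submodule F A) : ℕ → Submodule F A
  | 0 => fSub mul B C
  | n + 1 => fSub mul B (fIter mul B C n)

/-- `lcs mul B n = B^{n+1}`, the lower central series (index `0` is `B^1 = B`). -/
def lcs (mul : A →ₗ[F] A →ₗ[F] A) (B : Submodule F A) : ℕ → Submodule F A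
  | 0 => B
  | n + 1 => mulSub mul B (lcs mul B n)

/-- `ds mul B n = B^{(n+1)}`, the derived series (index `0` is `B^{(1)} = B`). -/
def ds (mul : A →ₗ[F] A →ₗ[F] A) (B : Submodule F A) : ℕ → Submodule F A
  | 0 => B
  | n + 1 => mulSub mul (ds mul B n) (ds mul B n)

/-- `B^ω = ⋂_{i ≥ 1} B^i`. -/
def omegaSub (mul : A →ₗ[F] A →ₗ[F] A) (B : Submodule F A) : Submodule F A :=
  ⨅ n, lcs mul B n

/-- `B` is a subalgebra: a subspace closed under multiplication. -/
def IsSubalg (mul : A →ₗ[F] A →ₗ[F] A) (B : Submodule F A) : Prop :=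
  ∀ x ∈ B, ∀ y ∈ B, mul x y ∈ B

/-- `I` is an ideal of the subalgebra `S`: `I ⊆ S` and `xI + Ix ⊆ I` for all `x ∈ S`. -/
def IsIdealIn (mul : A →ₗ[F] A →ₗ[F] A) (I S : Submodule F A) : Prop :=
  I ≤ S ∧ ∀ x ∈ S, ∀ y ∈ I, mul x y ∈ I ∧ mul y x ∈ I

/-- `B` is subinvariant in `S`: there is a chain of subalgebras
`B = c 0 ⊆ c 1 ⊆ ⋯ ⊆ c t = S` with each term an ideal of the next. -/
def IsSubinvariantIn (mul : A →ₗ[F] A →ₗ[F] A) (B S : Submodule F A) : Prop :=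
  ∃ (t : ℕ) (c : ℕ → Submodule F A), c 0 = B ∧ c t = S ∧
    (∀ i ≤ t, IsSubalg mul (c i)) ∧ ∀ i < t, IsIdealIn mul (c i) (c (i + 1))

/-- `B` is nilpotent: `B^m = 0` for some `m`. -/
def IsNilpotentSub (mul : A →ₗ[F] A →ₗ[F] A) (B : Submodule F A) : Prop :=
  ∃ m, lcs mul B m = ⊥

/-- `B` is solvable: `B^{(m)} = 0` for some `m`. -/
def IsSolvableSub (mul : A →ₗ[F] A →ₗ[F] A) (B : Submodule F A) : Prop :=
  ∃ m, ds mul B m = ⊥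

/-- The centralizer `Z_A(B) = {x : xb = 0 = bx for all b ∈ B}`. -/
def centralizerSet (mul : A →ₗ[F] A →ₗ[F] A) (B : Submodule F A) : Set A :=
  {x : A | ∀ b ∈ B, mul x b = 0 ∧ mul b x = 0}

/-- `R` is the radical (the maximal solvable ideal) of the subalgebra `S`. -/
def IsRadicalIn (mul : A →ₗ[F] A →ₗ[F] A) (S R : Submodule F A) : Prop :=
  IsIdealIn mul R S ∧ IsSolvableSub mul R ∧
    ∀ T, IsIdealIn mul T S → IsSolvableSub mul T → T ≤ R

/-- `N` is the nilradical (the maximal nilpotent ideal) of the subalgebra `S`. -/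
def IsNilradicalIn (mul : A →ₗ[F] A →ₗ[F] A) (S N : Submodule F A) : Prop :=
  IsIdealIn mul N S ∧ IsNilpotentSub mul N ∧
    ∀ T, IsIdealIn mul T S → IsNilpotentSub mul T → T ≤ N

/-- `H` is a Cartan subalgebra: a nilpotent self-normalizing subalgebra. -/
def IsCartan (mul : A →ₗ[F] A →ₗ[F] A) (H : Submodule F A) : Prop :=
  IsSubalg mul H ∧ IsNilpotentSub mul H ∧
    ∀ x : A, (∀ h ∈ H, mul x h ∈ H ∧ mul h x ∈ H) → x ∈ H

/-- The subalgebra generated by a set: the smallest subalgebra containing it. -/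
def subalgGen (mul : A →ₗ[F] A →ₗ[F] A) (s : Set A) : Submodule F A :=
  sInf {S : Submodule F A | IsSubalg mul S ∧ s ⊆ (S : Set A)}

end LeibnizDefs

section Aux

/-- In characteristic zero: if `tr (x * p(x)) = 0` for all `p`, then `x` is nilpotent. -/
theorem aux_nilp {F V : Type*} [Field F] [CharZero F] [AddCommGroup V] [Module F V]
    [FiniteDimensional F V] (x : Module.End F V)
    (h : ∀ p : Polynomial F, LinearMap.trace F V (x * Polynomial.aeval x p) = 0) :
    IsNilpotent x := by
  have hm0 : minpoly F x ≠ 0 := minpoly.ne_zero (Algebra.IsIntegral.isIntegral x)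
  obtain ⟨q, hq, hnd⟩ := Polynomial.exists_eq_pow_rootMultiplicity_mul_and_not_dvd
    (minpoly F x) hm0 0
  set m := (minpoly F x).rootMultiplicity 0
  simp only [map_zero, sub_zero] at hq hnd
  have hcop : IsCoprime (Polynomial.X ^ (m + 1)) q :=
    ((Polynomial.irreducible_X (R := F)).coprime_iff_not_dvd.2 hnd).pow_left
  obtain ⟨a, b, hab⟩ := hcop
  have hxq : x ^ m * Polynomial.aeval x q = 0 := by
    have := minpoly.aeval F x
    rw [hq] at this
    simpa using this
  set e := Polynomial.aeval x (a * Polynomial.X ^ (m + 1)) with he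
  have hsum : e + Polynomial.aeval x (b * q) = 1 := by
    rw [he, ← map_add, hab, map_one]
  have hzero : e * Polynomial.aeval x (b * q) = 0 := by
    have h1 : a * Polynomial.X ^ (m + 1) * (b * q)
        = (a * b * Polynomial.X) * (Polynomial.X ^ m * q) := by ring
    rw [he, ← map_mul, h1, map_mul, map_mul (Polynomial.aeval x) (Polynomial.X ^ m) q]
    simp [hxq]
  have hid : IsIdempotentElem e := by
    have := congrArg (fun z => e * z) hsum
    simp only [mul_add, hzero, add_zero, mul_one] at this
    exact this
  have htr : LinearMap.trace F V e = 0 := by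
    have h1 : e = x * Polynomial.aeval x (a * Polynomial.X ^ m) := by
      have h2 : a * Polynomial.X ^ (m + 1) = Polynomial.X * (a * Polynomial.X ^ m) := by ring
      rw [he, h2, map_mul, Polynomial.aeval_X]
    rw [h1]; exact h _
  have he0 : e = 0 := by
    have h1 := (LinearMap.IsIdempotentElem.isProj_range e hid).trace
    rw [htr] at h1
    have h2 : Module.finrank F (LinearMap.range e) = 0 := by exact_mod_cast h1.symm
    exact LinearMap.range_eq_bot.1 (Submodule.finrank_eq_zero.1 h2)
  rw [he0, zero_add] at hsum
  refine ⟨m, ?_⟩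
  have h1 : x ^ m * Polynomial.aeval x (b * q) = 0 := by
    rw [mul_comm b q, map_mul, ← mul_assoc, hxq, zero_mul]
  rwa [hsum, mul_one] at h1

/-- A multiplicatively closed subspace of nilpotent elements is nilpotent. -/
theorem aux_nil_pow {F R : Type*} [Field F] [Ring R] [Algebra F R]
    [FiniteDimensional F R] (J : Submodule F R) (hJ : J * J ≤ J)
    (hn : ∀ x ∈ J, IsNilpotent x) : ∃ m, J ^ m = ⊥ := by
  have hanti : ∀ k, J ^ (k + 1 + 1) ≤ J ^ (k + 1) := by
    intro k
    rw [pow_succ, pow_succ, mul_assoc]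
    exact mul_le_mul' le_rfl hJ
  have hA : Antitone (fun k => J ^ (k + 1)) := antitone_nat_of_succ_le hanti
  obtain ⟨n, hnn⟩ := IsArtinian.monotone_stabilizes
    (⟨fun k => OrderDual.toDual (J ^ (k + 1)), fun a b h => hA h⟩ : ℕ →o (Submodule F R)ᵒᵈ)
  have hst : ∀ k, n ≤ k → J ^ (n + 1) = J ^ (k + 1) := fun k hk => hnn k hk
  refine ⟨n + 1, ?_⟩
  set K := J ^ (n + 1) with hK
  have hKK : K * K = K := by
    rw [hK, ← pow_add]
    exact (hst (n + 1 + n) (by omega)).symm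
  have hKJ : K ≤ J := by
    have := hA (Nat.zero_le n)
    simpa using this
  by_contra hne
  obtain ⟨T, ⟨hT1, hT2⟩, hmin⟩ := WellFounded.has_min
    (wellFounded_lt (α := Submodule F R)) {T | T * K ≤ T ∧ T * K ≠ ⊥}
    ⟨K, hKK.le, by rw [hKK]; exact hne⟩
  have : ∃ r ∈ T, Submodule.span F {r} * K ≠ ⊥ := by
    by_contra hcon
    push Not at hcon
    apply hT2
    rw [eq_bot_iff, Submodule.mul_le]
    intro r hr k hk
    rw [← hcon r hr]
    exact Submodule.mul_mem_mul (Submodule.mem_span_singleton_self r) hk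
  obtain ⟨r, hr, hrK⟩ := this
  have hle : Submodule.span F {r} * K ≤ T :=
    (mul_le_mul' ((Submodule.span_singleton_le_iff_mem r T).2 hr) le_rfl).trans hT1
  have hRK : Submodule.span F {r} * K * K = Submodule.span F {r} * K := by
    rw [mul_assoc, hKK]
  have hnlt := hmin (Submodule.span F {r} * K) ⟨hRK.le, by rw [hRK]; exact hrK⟩
  have heq : Submodule.span F {r} * K = T := by
    rcases hle.lt_or_eq with h | h
    · exact absurd h hnlt
    · exact h
  rw [← heq] at hr
  obtain ⟨x, hx, hrx⟩ := Submodule.mem_span_singleton_mul.1 hr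
  obtain ⟨k, hk⟩ := hn x (hKJ hx)
  have hp : ∀ j, r * x ^ j = r := by
    intro j
    induction j with
    | zero => simp
    | succ j ih => rw [pow_succ, ← mul_assoc, ih, hrx]
  have hr0 : r = 0 := by rw [← hp k, hk, mul_zero]
  apply hrK
  rw [hr0]; simp

/-- The trace radical of a subalgebra of `End V`. -/
def auxJ {F V : Type*} [Field F] [AddCommGroup V] [Module F V]
    (U : Subalgebra F (Module.End F V)) : Submodule F (Module.End F V) where
  carrier := {x | x ∈ U ∧ ∀ y ∈ U, LinearMap.trace F V (x * y) = 0}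
  add_mem' := by
    rintro a b ⟨ha, ha'⟩ ⟨hb, hb'⟩
    refine ⟨add_mem ha hb, fun y hy => ?_⟩
    rw [add_mul, map_add, ha' y hy, hb' y hy, add_zero]
  zero_mem' := ⟨zero_mem _, fun y _ => by simp⟩
  smul_mem' := by
    rintro c a ⟨ha, ha'⟩
    refine ⟨U.smul_mem ha c, fun y hy => ?_⟩
    rw [smul_mul_assoc, map_smul, ha' y hy, smul_zero]

theorem auxJ_pow {F V : Type*} [Field F] [CharZero F] [AddCommGroup V] [Module F V]
    [FiniteDimensional F V] (U : Subalgebra F (Module.End F V)) : ∃ m, auxJ U ^ m = ⊥ := by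
  apply aux_nil_pow
  · rw [Submodule.mul_le]
    rintro a ⟨ha, ha'⟩ b ⟨hb, hb'⟩
    refine ⟨mul_mem ha hb, fun y hy => ?_⟩
    rw [mul_assoc]
    exact ha' _ (mul_mem hb hy)
  · rintro x ⟨hx, hx'⟩
    apply aux_nilp
    intro p
    apply hx'
    exact (Algebra.adjoin_le (Set.singleton_subset_iff.2 hx) : Algebra.adjoin F {x} ≤ U) (Polynomial.aeval_mem_adjoin_singleton F x)

theorem auxJ_comm {F V : Type*} [Field F] [AddCommGroup V] [Module F V]
    (U : Subalgebra F (Module.End F V)) (s : Module.End F V)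
    (hs : ∀ y ∈ U, s * y - y * s ∈ U) (x : Module.End F V) (hx : x ∈ auxJ U) :
    s * x - x * s ∈ auxJ U := by
  obtain ⟨hx1, hx2⟩ := hx
  refine ⟨hs x hx1, fun y hy => ?_⟩
  have h1 := hx2 _ (hs y hy)
  rw [mul_sub, map_sub] at h1
  rw [sub_mul, map_sub, mul_assoc, LinearMap.trace_mul_comm, mul_assoc, mul_assoc, ← neg_sub, h1,
    neg_zero]

theorem aux_adjoin_comm {F R : Type*} [Field F] [Ring R] [Algebra F R] (S : Set R) (s : R)
    (hs : ∀ y ∈ S, s * y - y * s ∈ Algebra.adjoin F S) :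
    ∀ y ∈ Algebra.adjoin F S, s * y - y * s ∈ Algebra.adjoin F S := by
  intro y hy
  induction hy using Algebra.adjoin_induction with
  | mem x hx => exact hs x hx
  | algebraMap r => rw [Algebra.commutes, sub_self]; exact zero_mem _
  | add x y _ _ hx hy =>
    have : s * (x + y) - (x + y) * s = (s * x - x * s) + (s * y - y * s) := by noncomm_ring
    rw [this]; exact add_mem hx hy
  | mul x y hx' hy' hx hy =>
    have : s * (x * y) - (x * y) * s = (s * x - x * s) * y + x * (s * y - y * s) := by
      noncomm_ring
    rw [this]; exact add_mem (mul_mem hx hy') (mul_mem hx' hy)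

/-- A nilpotent ideal lies in the trace radical. -/
theorem aux_nil_trace {F V : Type*} [Field F] [AddCommGroup V] [Module F V]
    [FiniteDimensional F V] (S : Set (Module.End F V)) (M : Submodule F (Module.End F V))
    (hMS : (M : Set (Module.End F V)) ⊆ S)
    (hid : ∀ s ∈ S, ∀ x ∈ M, s * x - x * s ∈ M) (hnil : ∃ m, M ^ m = ⊥) :
    M ≤ auxJ (Algebra.adjoin F S) := by
  set U := Algebra.adjoin F S with hU
  set U' := Subalgebra.toSubmodule U with hU'
  have h1U : ∀ x ∈ M, x ∈ M * U' := fun x hx => by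
    have := Submodule.mul_mem_mul hx (show (1 : Module.End F V) ∈ U' from one_mem U)
    rwa [mul_one] at this
  have hUU : U' * U' ≤ U' := by
    rw [Submodule.mul_le]
    intro a ha b hb
    exact mul_mem (S := Subalgebra F (Module.End F V)) ha hb
  have hUM : ∀ y ∈ U, ∀ x ∈ M, y * x ∈ M * U' := by
    intro y hy
    induction hy using Algebra.adjoin_induction with
    | mem s hs =>
      intro x hx
      have : s * x = (s * x - x * s) + x * s := by noncomm_ring
      rw [this]
      exact add_mem (h1U _ (hid s hs x hx))
        (Submodule.mul_mem_mul hx (show s ∈ U' from Algebra.subset_adjoin hs))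
    | algebraMap r =>
      intro x hx
      rw [← Algebra.smul_def]
      exact h1U _ (M.smul_mem r hx)
    | add a b _ _ ha hb =>
      intro x hx
      rw [add_mul]; exact add_mem (ha x hx) (hb x hx)
    | mul a b ha' hb' ha hb =>
      intro x hx
      rw [mul_assoc]
      have h2 : ∀ z ∈ M * U', a * z ∈ M * U' := by
        intro z hz
        induction hz using Submodule.mul_induction_on' with
        | mem_mul_mem p hp q hq =>
          rw [← mul_assoc]
          have h3 := Submodule.mul_mem_mul (ha p hp) hq
          rw [mul_assoc M] at h3
          exact mul_le_mul' le_rfl hUU h3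
        | add p _ q _ hp hq => rw [mul_add]; exact add_mem hp hq
      exact h2 _ (hb x hx)
  have hUM' : U' * M ≤ M * U' := Submodule.mul_le.2 hUM
  have hpow : ∀ k, (M * U') ^ (k + 1) ≤ M ^ (k + 1) * U' := by
    intro k
    induction k with
    | zero => simp
    | succ k ih =>
      calc (M * U') ^ (k + 1 + 1) = (M * U') ^ (k + 1) * (M * U') := pow_succ _ _
        _ ≤ M ^ (k + 1) * U' * (M * U') := mul_le_mul' ih le_rfl
        _ = M ^ (k + 1) * (U' * M) * U' := by simp only [mul_assoc]
        _ ≤ M ^ (k + 1) * (M * U') * U' :=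
            mul_le_mul' (mul_le_mul' le_rfl hUM') le_rfl
        _ = M ^ (k + 1 + 1) * (U' * U') := by rw [pow_succ M (k + 1)]; simp only [mul_assoc]
        _ ≤ M ^ (k + 1 + 1) * U' := mul_le_mul' le_rfl hUU
  obtain ⟨m, hm⟩ := hnil
  intro x hx
  refine ⟨Algebra.subset_adjoin (hMS hx), fun y hy => ?_⟩
  have hn : IsNilpotent (x * y) := by
    refine ⟨m + 1, ?_⟩
    have h1 : (x * y) ^ (m + 1) ∈ (M * U') ^ (m + 1) :=
      Submodule.pow_mem_pow _ (Submodule.mul_mem_mul hx hy) _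
    have h2 := hpow m h1
    rw [pow_succ, hm] at h2
    simpa using h2
  exact (LinearMap.isNilpotent_trace_of_isNilpotent hn).eq_zero

variable {F : Type*} {A : Type*} [Field F] [AddCommGroup A] [Module F A]

theorem mulSub_mem (mul : A →ₗ[F] A →ₗ[F] A) {B C : Submodule F A} {b c : A}
    (hb : b ∈ B) (hc : c ∈ C) : mul b c ∈ mulSub mul B C :=
  Submodule.subset_span ⟨b, hb, c, hc, rfl⟩

theorem mulSub_le (mul : A →ₗ[F] A →ₗ[F] A) {B C D : Submodule F A}
    (h : ∀ b ∈ B, ∀ c ∈ C, mul b c ∈ D) : mulSub mul B C ≤ D := by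
  rw [mulSub, Submodule.span_le]
  rintro z ⟨b, hb, c, hc, rfl⟩
  exact h b hb c hc

/-- Representation-theoretic core. -/
theorem aux_core [CharZero F] {V : Type*} [AddCommGroup V] [Module F V] [FiniteDimensional F V]
    (mul : A →ₗ[F] A →ₗ[F] A) (ρ : A →ₗ[F] Module.End F V)
    (hρ : ∀ x y, ρ (mul x y) = ρ x * ρ y - ρ y * ρ x)
    (t : ℕ) (c : ℕ → Submodule F A) (hs : ∀ i ≤ t, IsSubalg mul (c i))
    (hi : ∀ i < t, IsIdealIn mul (c i) (c (i + 1)))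
    (hnil : ∃ m, ((c 0).map ρ) ^ m = ⊥) :
    ∀ i ≤ t, c 0 ≤ c i ∧
      (c 0).map ρ ≤ auxJ (Algebra.adjoin F ((c i).map ρ : Set (Module.End F V))) := by
  intro i
  induction i with
  | zero =>
    intro _
    refine ⟨le_rfl, aux_nil_trace _ _ subset_rfl ?_ hnil⟩
    rintro _ ⟨x, hx, rfl⟩ _ ⟨y, hy, rfl⟩
    rw [← hρ]
    exact ⟨_, hs 0 (Nat.zero_le _) x hx y hy, rfl⟩
  | succ i ih =>
    intro hit
    obtain ⟨h0, hJ⟩ := ih (by omega)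
    obtain ⟨hle, hid⟩ := hi i (by omega)
    refine ⟨h0.trans hle, ?_⟩
    set U := Algebra.adjoin F ((c i).map ρ : Set (Module.End F V)) with hU
    have hnorm : ∀ x ∈ c (i + 1), ∀ z ∈ auxJ U, ρ x * z - z * ρ x ∈ auxJ U := by
      intro x hx z hz
      refine auxJ_comm U _ (aux_adjoin_comm _ _ ?_) z hz
      rintro _ ⟨y, hy, rfl⟩
      rw [← hρ]
      exact Algebra.subset_adjoin ⟨_, (hid x hx y hy).1, rfl⟩
    have key : (c i ⊓ (auxJ U).comap ρ).map ρ ≤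
        auxJ (Algebra.adjoin F ((c (i + 1)).map ρ : Set (Module.End F V))) := by
      apply aux_nil_trace
      · rintro _ ⟨x, hx, rfl⟩
        exact ⟨x, hle hx.1, rfl⟩
      · rintro _ ⟨x, hx, rfl⟩ _ ⟨y, hy, rfl⟩
        refine ⟨mul x y, ⟨(hid x hx y hy.1).1, ?_⟩, hρ x y⟩
        show ρ (mul x y) ∈ auxJ U
        rw [hρ]
        exact hnorm x hx _ hy.2
      · obtain ⟨m, hm⟩ := auxJ_pow U
        refine ⟨m, ?_⟩
        rw [eq_bot_iff, ← hm]
        refine pow_le_pow_left' ?_ m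
        rintro _ ⟨x, hx, rfl⟩
        exact hx.2
    refine le_trans (Submodule.map_mono ?_) key
    intro x hx
    exact ⟨h0 hx, hJ ⟨x, hx, rfl⟩⟩

theorem lcs_mul (mul : A →ₗ[F] A →ₗ[F] A)
    (hleib : ∀ x y z : A, mul x (mul y z) = mul (mul x y) z + mul y (mul x z))
    (N : Submodule F A) (i : ℕ) : ∀ j, ∀ x ∈ lcs mul N i, ∀ y ∈ lcs mul N j,
      mul x y ∈ lcs mul N (i + j + 1) := by
  induction i with
  | zero =>
    intro j x hx y hy
    rw [zero_add]
    exact mulSub_mem mul hx hy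
  | succ i ih =>
    intro j x hx y hy
    have : lcs mul N (i + 1) ≤ (lcs mul N (i + 1 + j + 1)).comap (mul.flip y) := by
      apply mulSub_le
      intro b hb z hz
      rw [Submodule.mem_comap, LinearMap.flip_apply]
      rw [← sub_eq_of_eq_add (hleib b z y)]
      apply sub_mem
      · have h1 := mulSub_mem mul hb (ih j z hz y hy)
        have h2 : i + 1 + j + 1 = (i + j + 1) + 1 := by omega
        rw [h2]; exact h1
      · have h1 := ih (j + 1) z hz _ (mulSub_mem mul hb hy)
        have h2 : i + 1 + j + 1 = i + (j + 1) + 1 := by omega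
        rw [h2]; exact h1
    exact this hx

theorem lcs_ideal (mul : A →ₗ[F] A →ₗ[F] A)
    (hleib : ∀ x y z : A, mul x (mul y z) = mul (mul x y) z + mul y (mul x z))
    (N S : Submodule F A) (h : IsIdealIn mul N S) (i : ℕ) :
    IsIdealIn mul (lcs mul N i) S := by
  have hsub : IsSubalg mul N := fun x hx y hy => (h.2 x (h.1 hx) y hy).1
  induction i with
  | zero => exact h
  | succ i ih =>
    have hle : lcs mul N (i + 1) ≤ lcs mul N i :=
      mulSub_le mul fun b hb z hz => (ih.2 b (h.1 hb) z hz).1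
    refine ⟨hle.trans ih.1, ?_⟩
    intro x hx y hy
    constructor
    · have : lcs mul N (i + 1) ≤ (lcs mul N (i + 1)).comap (mul x) := by
        apply mulSub_le
        intro b hb z hz
        rw [Submodule.mem_comap]
        rw [hleib]
        exact add_mem (mulSub_mem mul (h.2 x hx b hb).1 hz)
          (mulSub_mem mul hb (ih.2 x hx z hz).1)
      exact this hy
    · have : lcs mul N (i + 1) ≤ (lcs mul N (i + 1)).comap (mul.flip x) := by
        apply mulSub_le
        intro b hb z hz
        rw [Submodule.mem_comap, LinearMap.flip_apply]
        rw [← sub_eq_of_eq_add (hleib b z x)]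
        exact sub_mem (mulSub_mem mul hb (ih.2 x hx z hz).2)
          (lcs_mul mul hleib N i 0 z hz _ (h.2 x hx b hb).2)
      exact this hy

theorem lcs_anti (mul : A →ₗ[F] A →ₗ[F] A) (N : Submodule F A) (h : IsSubalg mul N) :
    Antitone (lcs mul N) := by
  apply antitone_nat_of_succ_le
  intro n
  induction n with
  | zero => exact mulSub_le mul h
  | succ n ih => exact mulSub_le mul fun b hb z hz => mulSub_mem mul hb (ih hz)

/-- Iterated left action of `B` on the whole algebra. -/
def auxX (mul : A →ₗ[F] A →ₗ[F] A) (B : Submodule F A) : ℕ → Submodule F A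
  | 0 => ⊤
  | n + 1 => mulSub mul B (auxX mul B n)

/-- `B^ω` is an ideal, and `B` acts nilpotently modulo it. -/
theorem aux_omega [FiniteDimensional F A] (mul : A →ₗ[F] A →ₗ[F] A)
    (hleib : ∀ x y z : A, mul x (mul y z) = mul (mul x y) z + mul y (mul x z))
    (t : ℕ) (c : ℕ → Submodule F A) (hs : ∀ i ≤ t, IsSubalg mul (c i))
    (hi : ∀ i < t, IsIdealIn mul (c i) (c (i + 1))) (ht : c t = ⊤) :
    ∃ W : Submodule F A, W ≤ c 0 ∧ IsIdealIn mul W ⊤ ∧ ∃ m, auxX mul (c 0) m ≤ W := by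
  have hB := hs 0 (Nat.zero_le _)
  have hA := lcs_anti mul (c 0) hB
  obtain ⟨n, hnn⟩ := IsArtinian.monotone_stabilizes
    (⟨fun k => OrderDual.toDual (lcs mul (c 0) k), fun a b h => hA h⟩ : ℕ →o (Submodule F A)ᵒᵈ)
  have hst : ∀ k, n ≤ k → lcs mul (c 0) n = lcs mul (c 0) k := fun k hk => hnn k hk
  have h0 : ∀ i ≤ t, c 0 ≤ c i := by
    intro i
    induction i with
    | zero => intro _; exact le_rfl
    | succ i ih => intro h; exact (ih (by omega)).trans (hi i (by omega)).1
  have hX1 : ∀ k ≤ t, auxX mul (c 0) k ≤ c (t - k) := by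
    intro k
    induction k with
    | zero => intro _; simp [ht]
    | succ k ih =>
      intro hk
      apply mulSub_le
      intro b hb z hz
      have h1 := ih (by omega) hz
      have h2 := hi (t - (k + 1)) (by omega)
      have h3 : t - (k + 1) + 1 = t - k := by omega
      rw [h3] at h2
      exact (h2.2 z h1 b (h0 _ (by omega) hb)).2
  have hX2 : ∀ k, auxX mul (c 0) (t + k) ≤ lcs mul (c 0) k := by
    intro k
    induction k with
    | zero => simpa [lcs] using hX1 t le_rfl
    | succ k ih => exact mulSub_le mul fun b hb z hz => mulSub_mem mul hb (ih hz)
  set W := lcs mul (c 0) n with hW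
  have hWB : mulSub mul (c 0) W = W := (hst (n + 1) (by omega)).symm
  have hW0 : W ≤ c 0 := hA (Nat.zero_le n)
  have hXW : auxX mul (c 0) (t + n) ≤ W := hX2 n
  have hid : ∀ i ≤ t, IsIdealIn mul W (c i) := by
    intro i
    induction i with
    | zero =>
      intro _
      exact lcs_ideal mul hleib _ _ ⟨le_rfl, fun x hx y hy => ⟨hB x hx y hy, hB y hy x hx⟩⟩ n
    | succ i ih =>
      intro hit
      have ih := ih (by omega)
      obtain ⟨hle, hI⟩ := hi i (by omega)
      refine ⟨ih.1.trans hle, ?_⟩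
      intro x hx
      have hb' : ∀ k, ∀ b ∈ c 0, ∀ z ∈ W ⊔ auxX mul (c 0) k,
          mul b z ∈ W ⊔ auxX mul (c 0) (k + 1) := by
        intro k b hb z hz
        obtain ⟨w, hw, u, hu, rfl⟩ := Submodule.mem_sup.1 hz
        rw [map_add]
        exact Submodule.add_mem_sup (ih.2 b (h0 i (by omega) hb) w hw).1 (mulSub_mem mul hb hu)
      have hl : ∀ k, W ≤ (W ⊔ auxX mul (c 0) k).comap (mul x) := by
        intro k
        induction k with
        | zero => simp [auxX]
        | succ k ihk =>
          rw [← hWB]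
          apply mulSub_le
          intro b hb z hz
          rw [Submodule.mem_comap]
          rw [hWB, hleib]
          refine add_mem (Submodule.mem_sup_left ?_) (hb' k b hb _ (ihk hz))
          exact (ih.2 _ (hI x hx b (h0 i (by omega) hb)).1 z hz).1
      have hr : ∀ k, W ≤ (W ⊔ auxX mul (c 0) k).comap (mul.flip x) := by
        intro k
        induction k with
        | zero => simp [auxX]
        | succ k ihk =>
          rw [← hWB]
          apply mulSub_le
          intro b hb z hz
          rw [Submodule.mem_comap, LinearMap.flip_apply]
          rw [hWB, ← sub_eq_of_eq_add (hleib b z x)]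
          refine sub_mem (hb' k b hb _ (ihk hz)) (Submodule.mem_sup_left ?_)
          exact (ih.2 _ (hI x hx b (h0 i (by omega) hb)).2 z hz).2
      have hsup : W ⊔ auxX mul (c 0) (t + n) = W := sup_eq_left.2 hXW
      intro y hy
      constructor
      · have := hl (t + n) hy
        rwa [hsup] at this
      · have := hr (t + n) hy
        rwa [hsup] at this
  exact ⟨W, hW0, ht ▸ hid t le_rfl, t + n, hXW⟩

/-- The left multiplication representation on the quotient by an ideal. -/
def auxRho (mul : A →ₗ[F] A →ₗ[F] A) (W : Submodule F A) (h : IsIdealIn mul W ⊤) :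
    A →ₗ[F] Module.End F (A ⧸ W) where
  toFun x := W.mapQ W (mul x) (fun y hy => (h.2 x trivial y hy).1)
  map_add' x y := by
    apply Submodule.linearMap_qext
    ext z
    simp
  map_smul' r x := by
    apply Submodule.linearMap_qext
    ext z
    simp

theorem auxRho_mk (mul : A →ₗ[F] A →ₗ[F] A) (W : Submodule F A) (h : IsIdealIn mul W ⊤) (x y : A) :
    auxRho mul W h x (W.mkQ y) = W.mkQ (mul x y) := rfl

theorem aux_main [CharZero F] [FiniteDimensional F A] (mul : A →ₗ[F] A →ₗ[F] A)
    (hleib : ∀ x y z : A, mul x (mul y z) = mul (mul x y) z + mul y (mul x z))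
    (B : Submodule F A) (hB : IsSubinvariantIn mul B ⊤) :
    ∃ N : Submodule F A, B ≤ N ∧ IsIdealIn mul N ⊤ ∧ ∃ m, lcs mul N m ≤ B := by
  obtain ⟨t, c, rfl, ht, hs, hi⟩ := hB
  obtain ⟨W, hW0, hW, m, hm⟩ := aux_omega mul hleib t c hs hi ht
  set ρ := auxRho mul W hW with hρdef
  have hρ : ∀ x y, ρ (mul x y) = ρ x * ρ y - ρ y * ρ x := by
    intro x y
    apply Submodule.linearMap_qext
    ext z
    show W.mkQ (mul (mul x y) z) = W.mkQ (mul x (mul y z)) - W.mkQ (mul y (mul x z))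
    rw [← map_sub, hleib x y z, add_sub_cancel_right]
  have hnil : ∃ m, ((c 0).map ρ) ^ m = ⊥ := by
    refine ⟨m, ?_⟩
    have h1 : ∀ k, ∀ f ∈ ((c 0).map ρ) ^ k, ∀ a, f (W.mkQ a) ∈ (auxX mul (c 0) k).map W.mkQ := by
      intro k
      induction k with
      | zero =>
        intro f _ a
        obtain ⟨b, hb⟩ := W.mkQ_surjective (f (W.mkQ a))
        exact ⟨b, trivial, hb⟩
      | succ k ih =>
        intro f hf a
        rw [pow_succ'] at hf
        induction hf using Submodule.mul_induction_on' with
        | mem_mul_mem p hp q hq =>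
          obtain ⟨b, hb, rfl⟩ := hp
          obtain ⟨u, hu, hu'⟩ := ih q hq a
          refine ⟨mul b u, mulSub_mem mul hb hu, ?_⟩
          rw [Module.End.mul_apply, ← hu', auxRho_mk]
        | add p _ q _ hp hq => rw [LinearMap.add_apply]; exact add_mem hp hq
    rw [eq_bot_iff]
    intro f hf
    rw [Submodule.mem_bot]
    apply Submodule.linearMap_qext
    ext a
    obtain ⟨u, hu, hu'⟩ := h1 m f hf a
    show f (W.mkQ a) = 0
    rw [← hu']
    simpa using hm hu
  obtain ⟨-, hJ⟩ := aux_core mul ρ hρ t c hs hi hnil t le_rfl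
  set U := Algebra.adjoin F ((c t).map ρ : Set (Module.End F (A ⧸ W))) with hU
  have hxU : ∀ x, ρ x ∈ U := fun x => Algebra.subset_adjoin ⟨x, by rw [ht]; trivial, rfl⟩
  have hcomm : ∀ x, ∀ z ∈ auxJ U, ρ x * z - z * ρ x ∈ auxJ U := fun x z hz =>
    auxJ_comm U _ (fun y hy => sub_mem (mul_mem (hxU x) hy) (mul_mem hy (hxU x))) z hz
  refine ⟨(auxJ U).comap ρ, fun x hx => hJ ⟨x, hx, rfl⟩, ⟨le_top, ?_⟩, ?_⟩
  · intro x _ y hy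
    have h1 := hcomm x _ hy
    constructor
    · rw [Submodule.mem_comap]
      rw [hρ]; exact h1
    · rw [Submodule.mem_comap]
      rw [hρ, ← neg_sub]; exact neg_mem h1
  · obtain ⟨m, hm⟩ := auxJ_pow U
    refine ⟨m, le_trans ?_ hW0⟩
    have h1 : ∀ k j, k + j = m → ∀ f ∈ auxJ U ^ j,
        lcs mul ((auxJ U).comap ρ) k ≤ LinearMap.ker (f ∘ₗ W.mkQ) := by
      intro k
      induction k with
      | zero =>
        intro j hj f hf
        rw [zero_add] at hj
        rw [hj, hm, Submodule.mem_bot] at hf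
        simp [hf]
      | succ k ih =>
        intro j hj f hf
        apply mulSub_le
        intro b hb z hz
        have h2 := ih (j + 1) (by omega) (f * ρ b)
          (by rw [pow_succ]; exact Submodule.mul_mem_mul hf hb) hz
        exact h2
    have h2 := h1 m 0 (by omega) 1 (by rw [pow_zero]; exact Submodule.one_le.1 le_rfl)
    intro z hz
    have h3 : W.mkQ z = 0 := h2 hz
    simpa using h3

end Aux

/-- over characteristic zero, if `B` is subinvariant, `c ∈ A` and
`B̄` is the smallest subalgebra containing `B` with `cB̄ + B̄c ⊆ B̄`, then `B̄`
is subinvariant in `A`. -/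
theorem stmt_18 {F A : Type*} [Field F] [CharZero F]
    [AddCommGroup A] [Module F A] [FiniteDimensional F A]
    (mul : A →ₗ[F] A →ₗ[F] A)
    (hleib : ∀ x y z : A, mul x (mul y z) = mul (mul x y) z + mul y (mul x z))
    (B : Submodule F A) (hB : IsSubinvariantIn mul B ⊤)
    (c : A) (Bbar : Submodule F A)
    (hsub : IsSubalg mul Bbar) (hBle : B ≤ Bbar)
    (hclosed : ∀ x ∈ Bbar, mul c x ∈ Bbar ∧ mul x c ∈ Bbar)
    (hmin : ∀ S : Submodule F A, IsSubalg mul S → B ≤ S →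
      (∀ x ∈ S, mul c x ∈ S ∧ mul x c ∈ S) → Bbar ≤ S) :
    IsSubinvariantIn mul Bbar ⊤ := by
  obtain ⟨N, hBN, hN, m, hm⟩ := aux_main mul hleib B hB
  have hbN : Bbar ≤ N := hmin N (fun x _ y hy => (hN.2 x trivial y hy).1) hBN
    (fun x hx => hN.2 c trivial x hx)
  have hlid := lcs_ideal mul hleib N ⊤ hN
  have hNs : IsSubalg mul N := fun x _ y hy => (hN.2 x trivial y hy).1
  have hsubalg : ∀ k, IsSubalg mul (Bbar ⊔ lcs mul N k) := by
    intro k x hx y hy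
    obtain ⟨b, hb, n, hn, rfl⟩ := Submodule.mem_sup.1 hx
    obtain ⟨b', hb', n', hn', rfl⟩ := Submodule.mem_sup.1 hy
    have h1 : mul (b + n) (b' + n') = mul b b' + (mul b n' + mul n (b' + n')) := by
      simp only [map_add, LinearMap.add_apply]; abel
    rw [h1]
    exact Submodule.add_mem_sup (hsub b hb b' hb')
      (add_mem ((hlid k).2 b trivial n' hn').1 ((hlid k).2 (b' + n') trivial n hn).2)
  have hstep : ∀ k, IsIdealIn mul (Bbar ⊔ lcs mul N (k + 1)) (Bbar ⊔ lcs mul N k) := by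
    intro k
    refine ⟨sup_le_sup_left (lcs_anti mul N hNs (Nat.le_succ k)) _, ?_⟩
    intro x hx y hy
    obtain ⟨b, hb, n, hn, rfl⟩ := Submodule.mem_sup.1 hx
    obtain ⟨b', hb', n', hn', rfl⟩ := Submodule.mem_sup.1 hy
    constructor
    · have h1 : mul (b + n) (b' + n') = mul b b' + (mul n b' + mul (b + n) n') := by
        simp only [map_add, LinearMap.add_apply]; abel
      rw [h1]
      exact Submodule.add_mem_sup (hsub b hb b' hb')
        (add_mem (lcs_mul mul hleib N k 0 n hn b' (hbN hb'))
          ((hlid (k + 1)).2 (b + n) trivial n' hn').1)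
    · have h1 : mul (b' + n') (b + n) = mul b' b + (mul b' n + mul n' (b + n)) := by
        simp only [map_add, LinearMap.add_apply]; abel
      rw [h1]
      exact Submodule.add_mem_sup (hsub b' hb' b hb)
        (add_mem (mulSub_mem mul (hbN hb') hn)
          ((hlid (k + 1)).2 (b + n) trivial n' hn').2)
  refine ⟨m + 1, fun i => if i ≤ m then Bbar ⊔ lcs mul N (m - i) else ⊤, ?_, ?_, ?_, ?_⟩
  · simpa using hm.trans hBle
  · simp
  · intro i _
    dsimp only
    split_ifs
    · exact hsubalg _
    · intro x _ y _; trivial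
  · intro i hi
    dsimp only
    rw [if_pos (by omega : i ≤ m)]
    by_cases h : i + 1 ≤ m
    · rw [if_pos h]
      have h1 := hstep (m - (i + 1))
      have h2 : m - (i + 1) + 1 = m - i := by omega
      rwa [h2] at h1
    · rw [if_neg h]
      have h2 : m - i = 0 := by omega
      rw [h2]
      have h3 : Bbar ⊔ lcs mul N 0 = N := sup_eq_right.2 hbN
      rw [h3]; exact hN
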